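/- Let b > 1 and β ∈ (0, 1/2), and let s ∈ (2, 3 − 2β). Then for almost every pair (Θ, Λ) ∈ [0,1]^ℕ × [0,1]^ℕ (with respect to the infinite product of uniform measures on [0,1]), the s-energy I_s(μ_{Θ,Λ}) = ∫₀¹∫₀¹ ((x − y)² + |f_{Θ,Λ}(x) − f_{Θ,Λ}(y)|²)^{−s/2} dx dy is finite. -/

import Mathlib

open MeasureTheory

/-- First coordinate of the random vector-valued Weierstrass function
`t ↦ ∑ b^{-βn} cos(2π(bⁿ t + θₙ))`. -/
noncomputable def W1 (b β : ℝ) (Θ : ℕ → ℝ) (t : ℝ) : ℝ :=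
  ∑' n : ℕ, b ^ (-β * (n : ℝ)) * Real.cos (2 * Real.pi * (b ^ n * t + Θ n))

/-- Second coordinate of the random vector-valued Weierstrass function
`t ↦ ∑ b^{-βn} sin(2π(bⁿ t + λₙ))`. -/
noncomputable def W2 (b β : ℝ) (Λ : ℕ → ℝ) (t : ℝ) : ℝ :=
  ∑' n : ℕ, b ^ (-β * (n : ℝ)) * Real.sin (2 * Real.pi * (b ^ n * t + Λ n))

/-- Euclidean distance `|f_{Θ,Λ}(x) - f_{Θ,Λ}(y)|` in ℝ². -/
noncomputable def Wdist (b β : ℝ) (Θ Λ : ℕ → ℝ) (x y : ℝ) : ℝ :=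
  Real.sqrt ((W1 b β Θ x - W1 b β Θ y) ^ 2 + (W2 b β Λ x - W2 b β Λ y) ^ 2)

/-- The graph `G(f_{Θ,Λ}) = {(t, f_{Θ,Λ}(t)) : t ∈ [0,1]}` inside ℝ³ = ℝ × ℝ². -/
def Wgraph (b β : ℝ) (Θ Λ : ℕ → ℝ) : Set (ℝ × ℝ × ℝ) :=
  {p | ∃ t ∈ Set.Icc (0 : ℝ) 1, p = (t, W1 b β Θ t, W2 b β Λ t)}

/-- `μ` is the infinite product over `ℕ` of the uniform probability measures on `[0,1]`:
the measure of every measurable cylinder is the corresponding finite product of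
uniform measures. -/
def IsUniformProductMeasure (μ : Measure (ℕ → ℝ)) : Prop :=
  ∀ (t : Finset ℕ) (s : ℕ → Set ℝ), (∀ i, MeasurableSet (s i)) →
    μ {f : ℕ → ℝ | ∀ i ∈ t, f i ∈ s i} =
      ∏ i ∈ t, (volume.restrict (Set.Icc (0 : ℝ) 1)) (s i)


lemma resample (μ : Measure (ℕ → ℝ)) (hμ : IsUniformProductMeasure μ) (i : ℕ)
    (F : (ℕ → ℝ) → ENNReal) (hF : Measurable F) :
    ∫⁻ f, F f ∂μ = ∫⁻ f, (∫⁻ u in Set.Icc (0 : ℝ) 1, F (Function.update f i u)) ∂μ := by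
  have hone : (volume.restrict (Set.Icc (0 : ℝ) 1)) Set.univ = 1 := by simp
  have : IsProbabilityMeasure (volume.restrict (Set.Icc (0 : ℝ) 1)) := ⟨hone⟩
  have : IsProbabilityMeasure μ := ⟨by simpa using hμ ∅ (fun _ => Set.univ) (by simp)⟩
  have hm : Measurable (fun p : (ℕ → ℝ) × ℝ => Function.update p.1 i p.2) := by
    rw [measurable_pi_iff]
    intro j
    by_cases h : j = i
    · subst h; simpa using measurable_snd
    · simp only [Function.update_of_ne h]; fun_prop
  have e1 : μ = Measure.infinitePi (fun _ : ℕ => volume.restrict (Set.Icc (0 : ℝ) 1)) := by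
    apply Measure.eq_infinitePi
    intro s t ht
    exact hμ s t ht
  have e2 : Measure.map (fun p : (ℕ → ℝ) × ℝ => Function.update p.1 i p.2)
      (μ.prod (volume.restrict (Set.Icc (0 : ℝ) 1))) =
      Measure.infinitePi (fun _ : ℕ => volume.restrict (Set.Icc (0 : ℝ) 1)) := by
    apply Measure.eq_infinitePi
    intro s t ht
    rw [Measure.map_apply hm (MeasurableSet.pi s.countable_toSet (fun j _ => ht j))]
    have : (fun p : (ℕ → ℝ) × ℝ => Function.update p.1 i p.2) ⁻¹' (Set.pi s t) =
        {f : ℕ → ℝ | ∀ j ∈ s.erase i, f j ∈ t j} ×ˢ (if i ∈ s then t i else Set.univ) := by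
      ext ⟨f, u⟩
      simp only [Set.mem_preimage, Set.mem_pi, Set.mem_prod, Set.mem_ofPred_eq, Finset.mem_erase,
        SetLike.mem_coe]
      constructor
      · intro h
        refine ⟨fun j hj => ?_, ?_⟩
        · simpa [Function.update_of_ne hj.1] using h j hj.2
        · split_ifs with hi
          · simpa using h i hi
          · trivial
      · rintro ⟨h1, h2⟩ j hj
        by_cases hji : j = i
        · subst hji; simpa [hj] using h2
        · simpa [Function.update_of_ne hji] using h1 j ⟨hji, hj⟩
    rw [this, Measure.prod_prod, hμ _ _ ht]
    split_ifs with hi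
    · rw [mul_comm, Finset.mul_prod_erase s (fun j => (volume.restrict (Set.Icc (0 : ℝ) 1)) (t j)) hi]
    · rw [hone, mul_one, Finset.erase_eq_of_notMem hi]
  calc ∫⁻ f, F f ∂μ = ∫⁻ f, F f ∂(Measure.map (fun p : (ℕ → ℝ) × ℝ => Function.update p.1 i p.2)
      (μ.prod (volume.restrict (Set.Icc (0 : ℝ) 1)))) := by rw [e2, ← e1]
    _ = _ := by
      rw [lintegral_map hF hm, lintegral_prod]
      exact (hF.comp hm).aemeasurable

noncomputable def cc (v : ℝ) : ℝ := if Real.cos v = 0 then 1 else |Real.cos v|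

lemma cc_pos (v : ℝ) : 0 < cc v := by
  unfold cc; split_ifs with h
  · norm_num
  · exact abs_pos.mpr h

lemma cc_meas : Measurable cc := by
  unfold cc
  refine Measurable.ite (measurableSet_eq_fun (by fun_prop) (by fun_prop)) (by fun_prop) (by fun_prop)

lemma cc_ae (φ : ℝ) : ∀ᵐ u : ℝ, Real.cos (2 * Real.pi * u + φ) ≠ 0 := by
  rw [ae_iff]
  simp only [not_not]
  apply Set.Countable.measure_zero
  have : {u : ℝ | Real.cos (2 * Real.pi * u + φ) = 0} ⊆
      Set.range (fun k : ℤ => ((2 * k + 1) * Real.pi / 2 - φ) / (2 * Real.pi)) := by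
    intro u hu
    obtain ⟨k, hk⟩ := Real.cos_eq_zero_iff.mp hu
    refine ⟨k, ?_⟩
    have := Real.pi_pos
    simp only
    rw [← hk]; field_simp; ring
  exact (Set.countable_range _).mono this

lemma lemA (g : ℝ → ENNReal) (c φ z : ℝ) (hc : c ≠ 0) :
    ∫⁻ u in Set.Icc (0 : ℝ) 1, ENNReal.ofReal (cc (2 * Real.pi * u + φ)) *
      g (z + c * Real.sin (2 * Real.pi * u + φ)) ≤ ENNReal.ofReal (1 / |c|) * ∫⁻ x, g x := by
  have hpi := Real.pi_pos
  have hpi3 := Real.pi_gt_three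
  set G : ℝ → ENNReal := fun u => ENNReal.ofReal (|Real.cos (2 * Real.pi * u + φ)|) *
      g (z + c * Real.sin (2 * Real.pi * u + φ)) with hG
  have h0 : ∫⁻ u in Set.Icc (0 : ℝ) 1, ENNReal.ofReal (cc (2 * Real.pi * u + φ)) *
      g (z + c * Real.sin (2 * Real.pi * u + φ)) = ∫⁻ u in Set.Icc (0 : ℝ) 1, G u := by
    apply lintegral_congr_ae
    filter_upwards [ae_restrict_of_ae (cc_ae φ)] with u hu
    simp [hG, cc, hu]
  rw [h0]
  set S : ℤ → Set ℝ := fun k => {u | k * Real.pi - Real.pi / 2 ≤ 2 * Real.pi * u + φ ∧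
    2 * Real.pi * u + φ ≤ k * Real.pi + Real.pi / 2} with hS
  have hSm : ∀ k, MeasurableSet (S k) := by
    intro k
    have h : Measurable (fun u : ℝ => 2 * Real.pi * u + φ) := by fun_prop
    exact (measurableSet_le measurable_const h).inter (measurableSet_le h measurable_const)
  have hpiece : ∀ k, ∫⁻ u in S k, G u ≤ ENNReal.ofReal (1 / (2 * Real.pi * |c|)) * ∫⁻ x, g x := by
    intro k
    have hinj : Set.InjOn (fun u => z + c * Real.sin (2 * Real.pi * u + φ)) (S k) := by
      intro u hu v hv huv
      have h1 : Real.sin (2 * Real.pi * u + φ) = Real.sin (2 * Real.pi * v + φ) := by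
        simpa [hc] using huv
      have h2 : Real.sin (2 * Real.pi * u + φ - k * Real.pi)
          = Real.sin (2 * Real.pi * v + φ - k * Real.pi) := by
        rw [Real.sin_sub, Real.sin_sub, h1, Real.sin_int_mul_pi]; simp
      have h3 := Real.injOn_sin ⟨by linarith [hu.1], by linarith [hu.2]⟩
        ⟨by linarith [hv.1], by linarith [hv.2]⟩ h2
      have : 2 * Real.pi * (u - v) = 0 := by linarith
      have : u - v = 0 := by
        rcases mul_eq_zero.mp this with h | h
        · linarith
        · exact h
      linarith
    have hder : ∀ u ∈ S k, HasDerivWithinAt (fun u => z + c * Real.sin (2 * Real.pi * u + φ))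
        (c * (Real.cos (2 * Real.pi * u + φ) * (2 * Real.pi))) (S k) u := by
      intro u _
      apply HasDerivAt.hasDerivWithinAt
      have : HasDerivAt (fun u : ℝ => 2 * Real.pi * u + φ) (2 * Real.pi) u := by
        simpa using ((hasDerivAt_id u).const_mul (2 * Real.pi)).add_const φ
      exact ((this.sin).const_mul c).const_add z
    have key := lintegral_image_eq_lintegral_abs_deriv_mul (hSm k) hder hinj g
    have hG2 : ∀ u, G u = ENNReal.ofReal (1 / (2 * Real.pi * |c|)) *
        (ENNReal.ofReal |c * (Real.cos (2 * Real.pi * u + φ) * (2 * Real.pi))| *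
          g (z + c * Real.sin (2 * Real.pi * u + φ))) := by
      intro u
      rw [← mul_assoc, ← ENNReal.ofReal_mul (by positivity)]
      simp only [hG]
      congr 2
      rw [abs_mul, abs_mul, abs_of_pos (by positivity : 0 < 2 * Real.pi)]
      have : |c| ≠ 0 := by simpa using hc
      field_simp
    simp_rw [hG2]
    rw [lintegral_const_mul' _ _ ENNReal.ofReal_ne_top, ← key]
    gcongr
    exact Measure.restrict_le_self
  set k0 : ℤ := ⌊φ / Real.pi + 1 / 2⌋ with hk0
  have hcov : Set.Icc (0 : ℝ) 1 ⊆ S k0 ∪ (S (k0 + 1) ∪ S (k0 + 2)) := by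
    intro u hu
    have a1 := Int.floor_le (φ / Real.pi + 1 / 2)
    have a2 := Int.lt_floor_add_one (φ / Real.pi + 1 / 2)
    rw [← hk0] at a1 a2
    have b1 : (k0 : ℝ) * Real.pi ≤ φ + Real.pi / 2 := by
      have := mul_le_mul_of_nonneg_right a1 hpi.le
      rw [add_mul, div_mul_cancel₀ _ hpi.ne'] at this; linarith
    have b2 : φ + Real.pi / 2 < (k0 : ℝ) * Real.pi + Real.pi := by
      have := mul_lt_mul_of_pos_right a2 hpi
      rw [add_mul, div_mul_cancel₀ _ hpi.ne'] at this; linarith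
    have c1 : 0 ≤ 2 * Real.pi * u := by have := hu.1; positivity
    have c2 : 2 * Real.pi * u ≤ 2 * Real.pi := by nlinarith [hu.2]
    simp only [hS, Set.mem_union, Set.mem_ofPred_eq]
    push_cast
    by_cases h1 : 2 * Real.pi * u + φ ≤ k0 * Real.pi + Real.pi / 2
    · left; constructor <;> linarith
    · right
      by_cases h2 : 2 * Real.pi * u + φ ≤ (k0 + 1) * Real.pi + Real.pi / 2
      · left; constructor <;> linarith
      · right; constructor <;> linarith
  calc ∫⁻ u in Set.Icc (0 : ℝ) 1, G u ≤ ∫⁻ u in S k0 ∪ (S (k0 + 1) ∪ S (k0 + 2)), G u :=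
        lintegral_mono_set hcov
    _ ≤ (∫⁻ u in S k0, G u) + ((∫⁻ u in S (k0 + 1), G u) + ∫⁻ u in S (k0 + 2), G u) := by
        refine (lintegral_union_le _ _ _).trans ?_
        gcongr
        exact lintegral_union_le _ _ _
    _ ≤ ENNReal.ofReal (1 / (2 * Real.pi * |c|)) * (∫⁻ x, g x) +
        (ENNReal.ofReal (1 / (2 * Real.pi * |c|)) * (∫⁻ x, g x) +
        ENNReal.ofReal (1 / (2 * Real.pi * |c|)) * ∫⁻ x, g x) := by
        gcongr <;> apply hpiece
    _ ≤ _ := by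
        rw [← add_mul, ← add_mul, ← ENNReal.ofReal_add (by positivity) (by positivity),
          ← ENNReal.ofReal_add (by positivity) (by positivity)]
        gcongr
        have : 0 < |c| := abs_pos.mpr hc
        have e : 1 / (2 * Real.pi * |c|) + (1 / (2 * Real.pi * |c|) + 1 / (2 * Real.pi * |c|)) =
            3 / (2 * Real.pi * |c|) := by ring
        rw [e, div_le_div_iff₀ (by positivity) this]
        nlinarith

noncomputable def g0 (t : ℝ) : ENNReal := (Set.Icc (-1 : ℝ) 1).indicator
  (fun t => ENNReal.ofReal (|t - 1| ^ (-(3 / 4) : ℝ)) + ENNReal.ofReal (|t + 1| ^ (-(3 / 4) : ℝ))) t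

/-- integrability of the power singularity -/
lemma abs_pow_int (γ : ℝ) (hγ : γ < 1) (R : ℝ) :
    ∫⁻ t in Set.Icc (-R) R, ENNReal.ofReal (|t| ^ (-γ)) < ⊤ := by
  apply IntegrableOn.setLIntegral_lt_top
  rcases le_or_gt 0 R with hR | hR
  · have h1 : IntervalIntegrable (fun t : ℝ => |t| ^ (-γ)) volume 0 R := by
      refine (intervalIntegral.intervalIntegrable_rpow' (by linarith : -1 < -γ)).congr ?_
      intro t ht
      rw [Set.uIoc_of_le hR] at ht
      simp [abs_of_pos ht.1]
    have h2 : IntervalIntegrable (fun t : ℝ => |t| ^ (-γ)) volume (-R) 0 := by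
      have := (IntervalIntegrable.iff_comp_neg (f := fun t : ℝ => |t| ^ (-γ)) (a := -R) (b := 0)).mpr
      apply this
      simpa using h1.symm
    have h3 := h2.trans h1
    rw [intervalIntegrable_iff_integrableOn_Icc_of_le (by linarith)] at h3
    exact h3
  · rw [Set.Icc_eq_empty (by linarith)]; simp

lemma shift_pow_int (γ : ℝ) (a : ℝ) (R : ℝ) (S : Set ℝ) (hS : MeasurableSet S)
    (hSR : ∀ t ∈ S, |t - a| ≤ R) :
    ∫⁻ t in S, ENNReal.ofReal (|t - a| ^ (-γ)) ≤
      ∫⁻ t in Set.Icc (-R) R, ENNReal.ofReal (|t| ^ (-γ)) := by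
  rw [← lintegral_indicator hS, ← lintegral_indicator measurableSet_Icc]
  rw [← lintegral_sub_right_eq_self (fun t => (Set.Icc (-R) R).indicator
    (fun t => ENNReal.ofReal (|t| ^ (-γ))) t) a]
  apply lintegral_mono
  intro t
  by_cases ht : t ∈ S
  · have : t - a ∈ Set.Icc (-R) R := abs_le.mp (hSR t ht)
    simp [ht, this]
  · simp [ht]

lemma g0_fin : ∫⁻ t, g0 t < ⊤ := by
  unfold g0
  rw [lintegral_indicator measurableSet_Icc, lintegral_add_left (by fun_prop)]
  apply ENNReal.add_lt_top.mpr
  constructor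
  · refine lt_of_le_of_lt (shift_pow_int (3/4) 1 2 _ measurableSet_Icc ?_)
      (abs_pow_int (3/4) (by norm_num) 2)
    rintro t ⟨h1, h2⟩
    rw [abs_le]; constructor <;> linarith
  · have := (shift_pow_int (3/4) (-1) 2 (Set.Icc (-1) 1) measurableSet_Icc ?_)
    · simp only [sub_neg_eq_add] at this
      exact lt_of_le_of_lt this (abs_pow_int (3/4) (by norm_num) 2)
    rintro t ⟨h1, h2⟩
    rw [abs_le]; constructor <;> linarith

lemma lemB (φ : ℝ) :
    ∫⁻ u in Set.Icc (0 : ℝ) 1, ENNReal.ofReal (cc (2 * Real.pi * u + φ) ^ (-(1 / 2) : ℝ)) ≤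
      ∫⁻ t, g0 t := by
  have hA := lemA g0 1 φ 0 one_ne_zero
  simp only [zero_add, one_mul, abs_one, div_one, ENNReal.ofReal_one] at hA
  refine le_trans (lintegral_mono_ae ?_) hA
  filter_upwards [ae_restrict_of_ae (cc_ae φ)] with u hu
  set v := 2 * Real.pi * u + φ
  have hv : Real.sin v ∈ Set.Icc (-1 : ℝ) 1 := ⟨Real.neg_one_le_sin v, Real.sin_le_one v⟩
  have hcp := cc_pos v
  have hsq : cc v ^ 2 = (1 - Real.sin v) * (Real.sin v + 1) := by
    simp only [cc, hu, if_false, sq_abs, Real.cos_sq']; ring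
  have hp : 0 < (1 - Real.sin v) * (Real.sin v + 1) := by rw [← hsq]; positivity
  have p1 : 0 < 1 - Real.sin v := by
    rcases (sub_nonneg.mpr hv.2).lt_or_eq with h | h
    · exact h
    · rw [← h] at hp; simp at hp
  have p2 : 0 < Real.sin v + 1 := by
    by_contra h
    nlinarith
  have e : cc v ^ (-(1 / 2) : ℝ) = cc v * (cc v ^ 2) ^ (-(3 / 4) : ℝ) := by
    rw [← Real.rpow_natCast, ← Real.rpow_mul hcp.le]
    nth_rewrite 2 [← Real.rpow_one (cc v)]
    rw [← Real.rpow_add hcp]; norm_num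
  rw [e, ENNReal.ofReal_mul hcp.le]
  gcongr
  simp only [g0, Set.indicator_of_mem hv]
  rw [← ENNReal.ofReal_add (by positivity) (by positivity)]
  apply ENNReal.ofReal_le_ofReal
  rw [abs_sub_comm, abs_of_pos p1, abs_of_pos p2, hsq]
  rcases le_total 0 (Real.sin v) with h | h
  · have : ((1 - Real.sin v) * (Real.sin v + 1)) ^ (-(3 / 4) : ℝ) ≤ (1 - Real.sin v) ^ (-(3 / 4) : ℝ) :=
      Real.rpow_le_rpow_of_nonpos p1 (by nlinarith) (by norm_num)
    have : 0 ≤ (Real.sin v + 1) ^ (-(3 / 4) : ℝ) := by positivity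
    linarith
  · have : ((1 - Real.sin v) * (Real.sin v + 1)) ^ (-(3 / 4) : ℝ) ≤ (Real.sin v + 1) ^ (-(3 / 4) : ℝ) :=
      Real.rpow_le_rpow_of_nonpos p2 (by nlinarith) (by norm_num)
    have : 0 ≤ (1 - Real.sin v) ^ (-(3 / 4) : ℝ) := by positivity
    linarith

noncomputable def KK : ENNReal := ∫⁻ t, g0 t

noncomputable def ww (φ : ℝ) (u : ℝ) : ENNReal :=
  ENNReal.ofReal (cc (2 * Real.pi * u + φ) ^ (-(1 / 2) : ℝ))

lemma ww_meas (φ : ℝ) : Measurable (ww φ) := by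
  unfold ww
  have := cc_meas
  fun_prop

lemma cc_meas' (φ : ℝ) : Measurable (fun u : ℝ => ENNReal.ofReal (cc (2 * Real.pi * u + φ))) := by
  have := cc_meas
  fun_prop

lemma ww_marg (μ : Measure (ℕ → ℝ)) (hμ : IsUniformProductMeasure μ) (φ : ℕ → ℝ)
    (j k : ℕ) (hjk : j ≠ k) :
    ∫⁻ f, ww (φ j) (f j) * ww (φ k) (f k) ∂μ ≤ KK * KK := by
  have : IsProbabilityMeasure μ := ⟨by simpa using hμ ∅ (fun _ => Set.univ) (by simp)⟩
  have hm : ∀ i, Measurable (fun f : ℕ → ℝ => ww (φ i) (f i)) := fun i =>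
    (ww_meas _).comp (measurable_pi_apply i)
  rw [resample μ hμ j (fun f => ww (φ j) (f j) * ww (φ k) (f k)) ((hm j).mul (hm k))]
  simp only [Function.update_self, Function.update_of_ne hjk.symm]
  calc ∫⁻ f, (∫⁻ u in Set.Icc (0 : ℝ) 1, ww (φ j) u * ww (φ k) (f k)) ∂μ
      ≤ ∫⁻ f, KK * ww (φ k) (f k) ∂μ := by
        apply lintegral_mono
        intro f
        simp only
        rw [lintegral_mul_const _ (ww_meas _)]
        gcongr
        exact lemB _
    _ = KK * ∫⁻ f, ww (φ k) (f k) ∂μ := lintegral_const_mul _ (hm k)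
    _ ≤ KK * KK := by
        gcongr
        rw [resample μ hμ k _ (hm k)]
        simp only [Function.update_self]
        calc _ ≤ ∫⁻ f, KK ∂μ := lintegral_mono (fun f => lemB _)
          _ = KK := by simp

lemma lemD (μ : Measure (ℕ → ℝ)) (hμ : IsUniformProductMeasure μ)
    (X : (ℕ → ℝ) → ℝ) (hXm : Measurable X) (cf φ : ℕ → ℝ)
    (hX : ∀ i f, ∃ z, ∀ u, X (Function.update f i u) =
      z + cf i * Real.sin (2 * Real.pi * u + φ i))
    (g : ℝ → ENNReal) (hg : Measurable g) (c : ℝ) (hc : 0 < c)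
    (i j k : ℕ) (hij : i ≠ j) (hik : i ≠ k) (hjk : j ≠ k) (hi : c ≤ |cf i|) :
    ∫⁻ f, (ENNReal.ofReal (cc (2 * Real.pi * f i + φ i)) * g (X f)) *
      (ww (φ j) (f j) * ww (φ k) (f k)) ∂μ ≤
      (ENNReal.ofReal (1 / c) * ∫⁻ x, g x) * (KK * KK) := by
  have hm : ∀ i, Measurable (fun f : ℕ → ℝ => ww (φ i) (f i)) := fun i =>
    (ww_meas _).comp (measurable_pi_apply i)
  have hm1 : Measurable (fun f : ℕ → ℝ => ENNReal.ofReal (cc (2 * Real.pi * f i + φ i))) :=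
    (cc_meas' (φ i)).comp (measurable_pi_apply i)
  have hup : ∀ f : ℕ → ℝ, Measurable (fun u : ℝ => Function.update f i u) := fun f =>
    measurable_update f
  rw [resample μ hμ i (fun f => (ENNReal.ofReal (cc (2 * Real.pi * f i + φ i)) * g (X f)) *
      (ww (φ j) (f j) * ww (φ k) (f k))) ((hm1.mul (hg.comp hXm)).mul ((hm j).mul (hm k)))]
  simp only [Function.update_self, Function.update_of_ne hij.symm, Function.update_of_ne hik.symm]
  calc _ ≤ ∫⁻ f, (ENNReal.ofReal (1 / c) * ∫⁻ x, g x) * (ww (φ j) (f j) * ww (φ k) (f k)) ∂μ := by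
        apply lintegral_mono
        intro f
        simp only
        have hmm : Measurable (fun u : ℝ => ENNReal.ofReal (cc (2 * Real.pi * u + φ i)) *
            g (X (Function.update f i u))) :=
          (cc_meas' (φ i)).mul (hg.comp (hXm.comp (hup f)))
        rw [lintegral_mul_const _ hmm]
        gcongr
        obtain ⟨z, hz⟩ := hX i f
        simp only [hz]
        have hne : cf i ≠ 0 := by
          intro h; rw [h, abs_zero] at hi; linarith
        refine (lemA g (cf i) (φ i) z hne).trans ?_
        gcongr
    _ = (ENNReal.ofReal (1 / c) * ∫⁻ x, g x) * ∫⁻ f, (ww (φ j) (f j) * ww (φ k) (f k)) ∂μ :=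
        lintegral_const_mul _ ((hm j).mul (hm k))
    _ ≤ _ := by
        gcongr
        exact ww_marg μ hμ φ j k hjk

lemma one_le_aux (a b c : ℝ) (ha : 0 < a) (hb : 0 < b) (hc : 0 < c) (h1 : b ≤ a) (h2 : c ≤ a) :
    1 ≤ ENNReal.ofReal a * (ENNReal.ofReal (b ^ (-(1 / 2) : ℝ)) *
      ENNReal.ofReal (c ^ (-(1 / 2) : ℝ))) := by
  rw [← ENNReal.ofReal_mul (by positivity), ← ENNReal.ofReal_mul (by positivity),
    ENNReal.one_le_ofReal]
  have e : a * (a ^ (-(1 / 2) : ℝ) * a ^ (-(1 / 2) : ℝ)) = 1 := by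
    rw [← Real.rpow_add ha]
    norm_num
    rw [Real.rpow_neg_one, mul_inv_cancel₀ ha.ne']
  refine e.symm.le.trans ?_
  have := Real.rpow_le_rpow_of_nonpos hb h1 (by norm_num : (-(1 / 2) : ℝ) ≤ 0)
  have := Real.rpow_le_rpow_of_nonpos hc h2 (by norm_num : (-(1 / 2) : ℝ) ≤ 0)
  gcongr

lemma lemE (μ : Measure (ℕ → ℝ)) (hμ : IsUniformProductMeasure μ)
    (X : (ℕ → ℝ) → ℝ) (hXm : Measurable X) (cf φ : ℕ → ℝ)
    (hX : ∀ i f, ∃ z, ∀ u, X (Function.update f i u) =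
      z + cf i * Real.sin (2 * Real.pi * u + φ i))
    (g : ℝ → ENNReal) (hg : Measurable g) (c : ℝ) (hc : 0 < c)
    (i j k : ℕ) (hij : i ≠ j) (hik : i ≠ k) (hjk : j ≠ k)
    (hi : c ≤ |cf i|) (hj : c ≤ |cf j|) (hk : c ≤ |cf k|) :
    ∫⁻ f, g (X f) ∂μ ≤ 3 * (KK * KK) * ENNReal.ofReal (1 / c) * ∫⁻ x, g x := by
  have hm : ∀ i, Measurable (fun f : ℕ → ℝ => ww (φ i) (f i)) := fun i =>
    (ww_meas _).comp (measurable_pi_apply i)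
  have hm1 : ∀ i, Measurable (fun f : ℕ → ℝ => ENNReal.ofReal (cc (2 * Real.pi * f i + φ i))) :=
    fun i => (cc_meas' (φ i)).comp (measurable_pi_apply i)
  set T : ℕ → ℕ → ℕ → (ℕ → ℝ) → ENNReal := fun i j k f =>
    (ENNReal.ofReal (cc (2 * Real.pi * f i + φ i)) * g (X f)) *
      (ww (φ j) (f j) * ww (φ k) (f k)) with hT
  have hTm : ∀ i j k, Measurable (T i j k) := fun i j k =>
    ((hm1 i).mul (hg.comp hXm)).mul ((hm j).mul (hm k))
  have hTle : ∀ i j k f, cc (2 * Real.pi * f j + φ j) ≤ cc (2 * Real.pi * f i + φ i) →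
      cc (2 * Real.pi * f k + φ k) ≤ cc (2 * Real.pi * f i + φ i) → g (X f) ≤ T i j k f := by
    intro i j k f h1 h2
    have := one_le_aux _ _ _ (cc_pos _) (cc_pos _) (cc_pos _) h1 h2
    calc g (X f) = 1 * g (X f) := (one_mul _).symm
      _ ≤ _ := mul_le_mul_left this _
      _ = T i j k f := by simp only [hT, ww]; ring
  have hsum : ∀ f, g (X f) ≤ T i j k f + (T j i k f + T k i j f) := by
    intro f
    rcases le_total (cc (2 * Real.pi * f j + φ j)) (cc (2 * Real.pi * f i + φ i)) with h1 | h1 <;>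
    rcases le_total (cc (2 * Real.pi * f k + φ k)) (cc (2 * Real.pi * f i + φ i)) with h2 | h2 <;>
    rcases le_total (cc (2 * Real.pi * f k + φ k)) (cc (2 * Real.pi * f j + φ j)) with h3 | h3
    · exact (hTle i j k f h1 h2).trans le_self_add
    · exact (hTle i j k f h1 h2).trans le_self_add
    · exact (hTle k i j f h2 (h1.trans h2)).trans (le_add_self.trans le_add_self)
    · exact (hTle k i j f h2 h3).trans (le_add_self.trans le_add_self)
    · exact (hTle j i k f h1 h3).trans (le_self_add.trans le_add_self)
    · exact (hTle j i k f h1 (h2.trans h1)).trans (le_self_add.trans le_add_self)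
    · exact (hTle j i k f h1 h3).trans (le_self_add.trans le_add_self)
    · exact (hTle k i j f h2 h3).trans (le_add_self.trans le_add_self)
  calc ∫⁻ f, g (X f) ∂μ ≤ ∫⁻ f, (T i j k f + (T j i k f + T k i j f)) ∂μ := lintegral_mono hsum
    _ = ∫⁻ f, T i j k f ∂μ + (∫⁻ f, T j i k f ∂μ + ∫⁻ f, T k i j f ∂μ) := by
        rw [lintegral_add_left (hTm _ _ _), lintegral_add_left (hTm _ _ _)]
    _ ≤ (ENNReal.ofReal (1 / c) * ∫⁻ x, g x) * (KK * KK) +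
        ((ENNReal.ofReal (1 / c) * ∫⁻ x, g x) * (KK * KK) +
        (ENNReal.ofReal (1 / c) * ∫⁻ x, g x) * (KK * KK)) := by
        refine add_le_add ?_ (add_le_add ?_ ?_)
        · exact lemD μ hμ X hXm cf φ hX g hg c hc i j k hij hik hjk hi
        · exact lemD μ hμ X hXm cf φ hX g hg c hc j i k hij.symm hjk hik hj
        · exact lemD μ hμ X hXm cf φ hX g hg c hc k i j hik.symm hjk.symm hij hk
    _ = _ := by ring

/-- scaling -/
lemma scale_int (r A : ℝ) (hA : 0 < A) :
    ∫⁻ x : ℝ, ENNReal.ofReal ((A ^ 2 + x ^ 2) ^ (-(r / 2))) =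
      ENNReal.ofReal (A ^ (1 - r)) * ∫⁻ x : ℝ, ENNReal.ofReal ((1 + x ^ 2) ^ (-(r / 2))) := by
  have key := lintegral_image_eq_lintegral_abs_deriv_mul (s := Set.univ) (f := fun x => A * x)
    (f' := fun _ => A) MeasurableSet.univ
    (fun x _ => HasDerivAt.hasDerivWithinAt (by simpa using ((hasDerivAt_id x).const_mul A)))
    (fun x _ y _ h => mul_left_cancel₀ hA.ne' h)
    (fun x => ENNReal.ofReal ((A ^ 2 + x ^ 2) ^ (-(r / 2))))
  have him : (fun x => A * x) '' Set.univ = Set.univ := by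
    rw [Set.image_univ, Set.range_eq_univ]
    intro y; exact ⟨y / A, by field_simp⟩
  rw [him] at key
  simp only [Measure.restrict_univ] at key
  rw [key, ← lintegral_const_mul' _ _ ENNReal.ofReal_ne_top]
  congr 1
  ext x
  rw [← ENNReal.ofReal_mul (by positivity), ← ENNReal.ofReal_mul (by positivity)]
  congr 1
  rw [abs_of_pos hA, show A ^ 2 + (A * x) ^ 2 = A ^ 2 * (1 + x ^ 2) by ring,
    Real.mul_rpow (by positivity) (by positivity), ← mul_assoc]
  congr 1
  rw [← Real.rpow_natCast, ← Real.rpow_mul hA.le]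
  nth_rewrite 1 [← Real.rpow_one A]
  rw [← Real.rpow_add hA]
  congr 1
  push_cast; ring

lemma scale_fin (r : ℝ) (hr : 1 < r) :
    ∫⁻ x : ℝ, ENNReal.ofReal ((1 + x ^ 2) ^ (-(r / 2))) < ⊤ := by
  have := (integrable_rpow_neg_one_add_norm_sq (E := ℝ) (μ := volume) (r := r)
    (by simpa using hr)).lintegral_lt_top
  simpa [neg_div] using this

lemma tsum_update (d : ℕ → ℝ → ℝ) (hs : ∀ f : ℕ → ℝ, Summable (fun n => d n (f n)))
    (i : ℕ) (f : ℕ → ℝ) (u : ℝ) :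
    ∑' n, d n (Function.update f i u n) = (∑' n, if n = i then 0 else d n (f n)) + d i u := by
  rw [(hs (Function.update f i u)).tsum_eq_add_tsum_ite i, add_comm]
  congr 1
  · apply tsum_congr
    intro n
    split_ifs with h
    · rfl
    · rw [Function.update_of_ne h]
  · simp

lemma coef_eq (b β : ℝ) (hb : 1 < b) (n : ℕ) : b ^ (-β * (n : ℝ)) = (b ^ n) ^ (-β) := by
  rw [mul_comm, Real.rpow_mul (by linarith), Real.rpow_natCast]

lemma coef_summable (b β : ℝ) (hb : 1 < b) (hβ : 0 < β) :
    Summable (fun n : ℕ => b ^ (-β * (n : ℝ))) := by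
  have h0 : 0 < b := by linarith
  have : (fun n : ℕ => b ^ (-β * (n : ℝ))) = fun n : ℕ => (b ^ (-β)) ^ n := by
    ext n; rw [Real.rpow_mul h0.le, Real.rpow_natCast]
  rw [this]
  exact summable_geometric_of_lt_one (by positivity) (Real.rpow_lt_one_of_one_lt_of_neg hb (by linarith))

lemma bd_cos (b β : ℝ) (hb : 1 < b) (n : ℕ) (v : ℝ) :
    ‖b ^ (-β * (n : ℝ)) * Real.cos v‖ ≤ b ^ (-β * (n : ℝ)) := by
  have h0 : 0 < b := by linarith
  have h1 : 0 < b ^ (-β * (n : ℝ)) := by positivity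
  rw [norm_mul, Real.norm_of_nonneg h1.le]
  exact mul_le_of_le_one_right h1.le (Real.abs_cos_le_one v)

lemma bd_sin (b β : ℝ) (hb : 1 < b) (n : ℕ) (v : ℝ) :
    ‖b ^ (-β * (n : ℝ)) * Real.sin v‖ ≤ b ^ (-β * (n : ℝ)) := by
  have h0 : 0 < b := by linarith
  have h1 : 0 < b ^ (-β * (n : ℝ)) := by positivity
  rw [norm_mul, Real.norm_of_nonneg h1.le]
  exact mul_le_of_le_one_right h1.le (Real.abs_sin_le_one v)

lemma W1_cont (b β : ℝ) (hb : 1 < b) (hβ : 0 < β) :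
    Continuous (fun q : (ℕ → ℝ) × ℝ => W1 b β q.1 q.2) := by
  unfold W1
  refine continuous_tsum (fun n => ?_) (coef_summable b β hb hβ) (fun n q => bd_cos b β hb n _)
  fun_prop

lemma W2_cont (b β : ℝ) (hb : 1 < b) (hβ : 0 < β) :
    Continuous (fun q : (ℕ → ℝ) × ℝ => W2 b β q.1 q.2) := by
  unfold W2
  refine continuous_tsum (fun n => ?_) (coef_summable b β hb hβ) (fun n q => bd_sin b β hb n _)
  fun_prop

lemma W1_cont' (b β : ℝ) (hb : 1 < b) (hβ : 0 < β) (x : ℝ) :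
    Continuous (fun f : ℕ → ℝ => W1 b β f x) := by
  have h := W1_cont b β hb hβ
  exact h.comp (f := fun f : ℕ → ℝ => (f, x)) (by fun_prop)

lemma W1_struct (b β : ℝ) (hb : 1 < b) (hβ : 0 < β) (x y : ℝ) (i : ℕ) (f : ℕ → ℝ) :
    ∃ z, ∀ u, W1 b β (Function.update f i u) x - W1 b β (Function.update f i u) y =
      z + (-(2 * (b ^ (-β * (i : ℝ)) * Real.sin (Real.pi * (b ^ i * (x - y)))))) *
        Real.sin (2 * Real.pi * u + Real.pi * b ^ i * (x + y)) := by
  have hs : ∀ t, ∀ f : ℕ → ℝ, Summable (fun n : ℕ =>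
      b ^ (-β * (n : ℝ)) * Real.cos (2 * Real.pi * (b ^ n * t + f n))) := fun t f =>
    (coef_summable b β hb hβ).of_norm_bounded (fun n => bd_cos b β hb n _)
  have ex := tsum_update (fun n v => b ^ (-β * (n : ℝ)) * Real.cos (2 * Real.pi * (b ^ n * x + v)))
    (hs x) i f
  have ey := tsum_update (fun n v => b ^ (-β * (n : ℝ)) * Real.cos (2 * Real.pi * (b ^ n * y + v)))
    (hs y) i f
  refine ⟨(∑' n : ℕ, if n = i then 0 else
      b ^ (-β * (n : ℝ)) * Real.cos (2 * Real.pi * (b ^ n * x + f n))) - (∑' n : ℕ, if n = i then 0 else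
      b ^ (-β * (n : ℝ)) * Real.cos (2 * Real.pi * (b ^ n * y + f n))), fun u => ?_⟩
  · unfold W1
    rw [ex u, ey u, add_sub_add_comm]
    congr 1
    rw [← mul_sub, Real.cos_sub_cos,
      show (2 * Real.pi * (b ^ i * x + u) + 2 * Real.pi * (b ^ i * y + u)) / 2 =
        2 * Real.pi * u + Real.pi * b ^ i * (x + y) by ring,
      show (2 * Real.pi * (b ^ i * x + u) - 2 * Real.pi * (b ^ i * y + u)) / 2 =
        Real.pi * (b ^ i * (x - y)) by ring]
    ring

lemma W2_cont' (b β : ℝ) (hb : 1 < b) (hβ : 0 < β) (x : ℝ) :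
    Continuous (fun f : ℕ → ℝ => W2 b β f x) := by
  have h := W2_cont b β hb hβ
  exact h.comp (f := fun f : ℕ → ℝ => (f, x)) (by fun_prop)

lemma W2_struct (b β : ℝ) (hb : 1 < b) (hβ : 0 < β) (x y : ℝ) (i : ℕ) (f : ℕ → ℝ) :
    ∃ z, ∀ u, W2 b β (Function.update f i u) x - W2 b β (Function.update f i u) y =
      z + (2 * (b ^ (-β * (i : ℝ)) * Real.sin (Real.pi * (b ^ i * (x - y))))) *
        Real.sin (2 * Real.pi * u + (Real.pi * b ^ i * (x + y) + Real.pi / 2)) := by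
  have hs : ∀ t, ∀ f : ℕ → ℝ, Summable (fun n : ℕ =>
      b ^ (-β * (n : ℝ)) * Real.sin (2 * Real.pi * (b ^ n * t + f n))) := fun t f =>
    (coef_summable b β hb hβ).of_norm_bounded (fun n => bd_sin b β hb n _)
  have ex := tsum_update (fun n v => b ^ (-β * (n : ℝ)) * Real.sin (2 * Real.pi * (b ^ n * x + v)))
    (hs x) i f
  have ey := tsum_update (fun n v => b ^ (-β * (n : ℝ)) * Real.sin (2 * Real.pi * (b ^ n * y + v)))
    (hs y) i f
  refine ⟨(∑' n : ℕ, if n = i then 0 else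
      b ^ (-β * (n : ℝ)) * Real.sin (2 * Real.pi * (b ^ n * x + f n))) - (∑' n : ℕ, if n = i then 0 else
      b ^ (-β * (n : ℝ)) * Real.sin (2 * Real.pi * (b ^ n * y + f n))), fun u => ?_⟩
  · unfold W2
    rw [ex u, ey u, add_sub_add_comm]
    congr 1
    rw [← mul_sub, Real.sin_sub_sin,
      show (2 * Real.pi * (b ^ i * x + u) + 2 * Real.pi * (b ^ i * y + u)) / 2 =
        2 * Real.pi * u + Real.pi * b ^ i * (x + y) by ring,
      show (2 * Real.pi * (b ^ i * x + u) - 2 * Real.pi * (b ^ i * y + u)) / 2 =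
        Real.pi * (b ^ i * (x - y)) by ring, ← add_assoc, Real.sin_add_pi_div_two]
    ring

lemma coef_bd (b β : ℝ) (hb : 1 < b) (hβ : 0 < β) (D : ℝ) (hD : D ≠ 0)
    (hD2 : b ^ 2 * |D| ≤ 1 / 2) :
    ∃ N : ℕ, ∀ n : ℕ, N ≤ n → n ≤ N + 2 →
      (b ^ 3)⁻¹ * |D| ^ β ≤ b ^ (-β * (n : ℝ)) * |Real.sin (Real.pi * (b ^ n * D))| := by
  have h0 : 0 < b := by linarith
  have hDp : 0 < |D| := abs_pos.mpr hD
  have hpi := Real.pi_pos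
  have hP : 0 < 2 * (b ^ 2 * |D|) := by positivity
  obtain ⟨N, h1, h2⟩ := exists_nat_pow_near (x := 1 / (2 * (b ^ 2 * |D|))) (y := b)
    (by rw [le_div_iff₀ hP]; linarith) hb
  rw [le_div_iff₀ hP] at h1
  rw [div_lt_iff₀ hP] at h2
  refine ⟨N, fun n hn1 hn2 => ?_⟩
  have u1 : b ^ n * |D| ≤ 1 / 2 := by
    have : b ^ n ≤ b ^ (N + 2) := pow_le_pow_right₀ hb.le hn2
    have : b ^ n * |D| ≤ b ^ (N + 2) * |D| := by gcongr
    rw [pow_add] at this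
    nlinarith
  have l1 : (b ^ 3)⁻¹ ≤ 2 * (b ^ n * |D|) := by
    have : b ^ N ≤ b ^ n := pow_le_pow_right₀ hb.le hn1
    have : b ^ N * |D| ≤ b ^ n * |D| := by gcongr
    have h3 : (b ^ 3)⁻¹ ≤ 2 * (b ^ N * |D|) := by
      rw [inv_le_iff_one_le_mul₀ (by positivity)]
      rw [pow_succ] at h2
      nlinarith
    linarith
  have hsin : (b ^ 3)⁻¹ ≤ |Real.sin (Real.pi * (b ^ n * D))| := by
    have e : |Real.sin (Real.pi * (b ^ n * D))| = |Real.sin (Real.pi * (b ^ n * |D|))| := by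
      rcases abs_choice D with h | h
      · rw [h]
      · rw [h, mul_neg, mul_neg, Real.sin_neg, abs_neg]
    rw [e]
    have hnn : 0 ≤ b ^ n * |D| := by positivity
    have := Real.mul_le_sin (x := Real.pi * (b ^ n * |D|)) (by positivity) (by nlinarith)
    rw [show 2 / Real.pi * (Real.pi * (b ^ n * |D|)) = 2 * (b ^ n * |D|) by field_simp] at this
    exact l1.trans (this.trans (le_abs_self _))
  have ha : |D| ^ β ≤ b ^ (-β * (n : ℝ)) := by
    rw [coef_eq b β hb, Real.rpow_neg (by positivity), ← Real.inv_rpow (by positivity)]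
    have : |D| ≤ (b ^ n)⁻¹ := by
      rw [le_inv_comm₀ hDp (by positivity), ← one_div, le_div_iff₀ hDp]; linarith
    gcongr
  rw [mul_comm]
  gcongr

lemma EX_bd (b β : ℝ) (hb : 1 < b) (hβ : 0 < β)
    (μ : Measure (ℕ → ℝ)) (hμ : IsUniformProductMeasure μ) (x y c : ℝ) (hc : 0 < c) (N : ℕ)
    (hN : ∀ n : ℕ, N ≤ n → n ≤ N + 2 →
      c ≤ b ^ (-β * (n : ℝ)) * |Real.sin (Real.pi * (b ^ n * (x - y)))|)
    (g : ℝ → ENNReal) (hg : Measurable g) :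
    ∫⁻ f, g (W1 b β f x - W1 b β f y) ∂μ ≤
      3 * (KK * KK) * ENNReal.ofReal (1 / c) * ∫⁻ x, g x := by
  have h0 : 0 < b := by linarith
  have hXc : Continuous (fun f : ℕ → ℝ => W1 b β f x - W1 b β f y) :=
    (W1_cont' b β hb hβ x).sub (W1_cont' b β hb hβ y)
  obtain ⟨cf, hcf⟩ : ∃ cf : ℕ → ℝ, cf = fun i : ℕ => -(2 * (b ^ (-β * (i : ℝ)) * Real.sin (Real.pi * (b ^ i * (x - y))))) := ⟨_, rfl⟩
  obtain ⟨φ, hφ⟩ : ∃ φ : ℕ → ℝ, φ = fun i : ℕ => Real.pi * b ^ i * (x + y) := ⟨_, rfl⟩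
  have hcoef : ∀ n : ℕ, N ≤ n → n ≤ N + 2 → c ≤ |cf n| := by
    intro n h1 h2
    have h3 := hN n h1 h2
    have h4 : 0 < b ^ (-β * (n : ℝ)) := by positivity
    simp only [hcf]
    rw [abs_neg, abs_mul, abs_mul, abs_of_pos h4, abs_two]
    linarith
  have hst : ∀ i f, ∃ z, ∀ u, (fun f : ℕ → ℝ => W1 b β f x - W1 b β f y)
      (Function.update f i u) = z + cf i * Real.sin (2 * Real.pi * u + φ i) := by
    intro i f
    obtain ⟨z, hz⟩ := W1_struct b β hb hβ x y i f
    refine ⟨z, fun u => ?_⟩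
    simp only [hcf, hφ]
    exact hz u
  have n1 : N ≠ N + 1 := by omega
  have n2 : N ≠ N + 2 := by omega
  have n3 : N + 1 ≠ N + 2 := by omega
  exact lemE μ hμ _ hXc.measurable cf φ hst g hg c hc N (N + 1) (N + 2) n1 n2 n3
    (hcoef N (by omega) (by omega)) (hcoef (N + 1) (by omega) (by omega))
    (hcoef (N + 2) (by omega) (by omega))

lemma EY_bd (b β : ℝ) (hb : 1 < b) (hβ : 0 < β)
    (μ : Measure (ℕ → ℝ)) (hμ : IsUniformProductMeasure μ) (x y c : ℝ) (hc : 0 < c) (N : ℕ)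
    (hN : ∀ n : ℕ, N ≤ n → n ≤ N + 2 →
      c ≤ b ^ (-β * (n : ℝ)) * |Real.sin (Real.pi * (b ^ n * (x - y)))|)
    (g : ℝ → ENNReal) (hg : Measurable g) :
    ∫⁻ f, g (W2 b β f x - W2 b β f y) ∂μ ≤
      3 * (KK * KK) * ENNReal.ofReal (1 / c) * ∫⁻ x, g x := by
  have h0 : 0 < b := by linarith
  have hXc : Continuous (fun f : ℕ → ℝ => W2 b β f x - W2 b β f y) :=
    (W2_cont' b β hb hβ x).sub (W2_cont' b β hb hβ y)
  obtain ⟨cf, hcf⟩ : ∃ cf : ℕ → ℝ, cf = fun i : ℕ => 2 * (b ^ (-β * (i : ℝ)) * Real.sin (Real.pi * (b ^ i * (x - y)))) := ⟨_, rfl⟩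
  obtain ⟨φ, hφ⟩ : ∃ φ : ℕ → ℝ, φ = fun i : ℕ => Real.pi * b ^ i * (x + y) + Real.pi / 2 := ⟨_, rfl⟩
  have hcoef : ∀ n : ℕ, N ≤ n → n ≤ N + 2 → c ≤ |cf n| := by
    intro n h1 h2
    have h3 := hN n h1 h2
    have h4 : 0 < b ^ (-β * (n : ℝ)) := by positivity
    simp only [hcf]
    rw [abs_mul, abs_mul, abs_of_pos h4, abs_two]
    linarith
  have hst : ∀ i f, ∃ z, ∀ u, (fun f : ℕ → ℝ => W2 b β f x - W2 b β f y)
      (Function.update f i u) = z + cf i * Real.sin (2 * Real.pi * u + φ i) := by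
    intro i f
    obtain ⟨z, hz⟩ := W2_struct b β hb hβ x y i f
    refine ⟨z, fun u => ?_⟩
    simp only [hcf, hφ]
    exact hz u
  have n1 : N ≠ N + 1 := by omega
  have n2 : N ≠ N + 2 := by omega
  have n3 : N + 1 ≠ N + 2 := by omega
  exact lemE μ hμ _ hXc.measurable cf φ hst g hg c hc N (N + 1) (N + 2) n1 n2 n3
    (hcoef N (by omega) (by omega)) (hcoef (N + 1) (by omega) (by omega))
    (hcoef (N + 2) (by omega) (by omega))

/-- near diagonal constant -/
noncomputable def C1 (b s : ℝ) : ENNReal :=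
  (3 * (KK * KK)) ^ 2 * (ENNReal.ofReal (b ^ 3)) ^ 2 *
    (∫⁻ x : ℝ, ENNReal.ofReal ((1 + x ^ 2) ^ (-(s / 2)))) *
    (∫⁻ x : ℝ, ENNReal.ofReal ((1 + x ^ 2) ^ (-((s - 1) / 2))))

lemma near_bd (b β s : ℝ) (hb : 1 < b) (hβ : 0 < β) (hs : 2 < s)
    (μ : Measure (ℕ → ℝ)) (hμ : IsUniformProductMeasure μ) (x y : ℝ) (hxy : x - y ≠ 0)
    (hD : b ^ 2 * |x - y| ≤ 1 / 2) :
    ∫⁻ p, ENNReal.ofReal (((x - y) ^ 2 + (Wdist b β p.1 p.2 x y) ^ 2) ^ (-(s / 2))) ∂(μ.prod μ) ≤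
      C1 b s * ENNReal.ofReal (|x - y| ^ (-(s - 2 + 2 * β))) := by
  have hprob : IsProbabilityMeasure μ := ⟨by simpa using hμ ∅ (fun _ => Set.univ) (by simp)⟩
  have h0 : 0 < b := by linarith
  obtain ⟨N, hN⟩ := coef_bd b β hb hβ (x - y) hxy hD
  set D := x - y with hDdef
  have hDp : 0 < |D| := abs_pos.mpr hxy
  set c := (b ^ 3)⁻¹ * |D| ^ β with hc
  have hcp : 0 < c := by positivity
  set X : (ℕ → ℝ) → ℝ := fun f => W1 b β f x - W1 b β f y with hX
  set Y : (ℕ → ℝ) → ℝ := fun f => W2 b β f x - W2 b β f y with hY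
  have hXc : Continuous X :=
    (W1_cont' b β hb hβ x).sub (W1_cont' b β hb hβ y)
  have hYc : Continuous Y :=
    (W2_cont' b β hb hβ x).sub (W2_cont' b β hb hβ y)
  have EX : ∀ g : ℝ → ENNReal, Measurable g →
      ∫⁻ f, g (X f) ∂μ ≤ 3 * (KK * KK) * ENNReal.ofReal (1 / c) * ∫⁻ x, g x :=
    EX_bd b β hb hβ μ hμ x y c hcp N hN
  have EY : ∀ g : ℝ → ENNReal, Measurable g →
      ∫⁻ f, g (Y f) ∂μ ≤ 3 * (KK * KK) * ENNReal.ofReal (1 / c) * ∫⁻ x, g x :=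
    EY_bd b β hb hβ μ hμ x y c hcp N hN
  have hW : ∀ p : (ℕ → ℝ) × (ℕ → ℝ), (Wdist b β p.1 p.2 x y) ^ 2 = X p.1 ^ 2 + Y p.2 ^ 2 := by
    intro p
    unfold Wdist
    rw [Real.sq_sqrt (by positivity)]
  simp_rw [hW]
  set M : ENNReal := 3 * (KK * KK) * ENNReal.ofReal (1 / c) with hM
  set J1 := (∫⁻ x : ℝ, ENNReal.ofReal ((1 + x ^ 2) ^ (-(s / 2)))) with hJ1
  set J2 := (∫⁻ x : ℝ, ENNReal.ofReal ((1 + x ^ 2) ^ (-((s - 1) / 2)))) with hJ2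
  have hmeas : Measurable (fun p : (ℕ → ℝ) × (ℕ → ℝ) =>
      ENNReal.ofReal ((D ^ 2 + (X p.1 ^ 2 + Y p.2 ^ 2)) ^ (-(s / 2)))) := by
    have := hXc.measurable
    have := hYc.measurable
    fun_prop
  rw [lintegral_prod _ hmeas.aemeasurable]
  have hD2 : 0 < D ^ 2 := by positivity
  have inner : ∀ f, ∫⁻ l, ENNReal.ofReal ((D ^ 2 + (X f ^ 2 + Y l ^ 2)) ^ (-(s / 2))) ∂μ ≤
      M * J1 * ENNReal.ofReal ((D ^ 2 + X f ^ 2) ^ (-((s - 1) / 2))) := by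
    intro f
    have hA : 0 < D ^ 2 + X f ^ 2 := by positivity
    have h1 := EY (fun t => ENNReal.ofReal ((Real.sqrt (D ^ 2 + X f ^ 2) ^ 2 + t ^ 2) ^ (-(s / 2))))
      (by fun_prop)
    rw [scale_int s _ (Real.sqrt_pos.mpr hA)] at h1
    simp only [Real.sq_sqrt hA.le, add_assoc] at h1
    refine h1.trans (le_of_eq ?_)
    rw [Real.sqrt_eq_rpow, ← Real.rpow_mul hA.le, show (1 / 2 * (1 - s)) = -((s - 1) / 2) by ring]
    ring
  calc _ ≤ ∫⁻ f, M * J1 * ENNReal.ofReal ((D ^ 2 + X f ^ 2) ^ (-((s - 1) / 2))) ∂μ :=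
        lintegral_mono inner
    _ = M * J1 * ∫⁻ f, ENNReal.ofReal ((D ^ 2 + X f ^ 2) ^ (-((s - 1) / 2))) ∂μ := by
        have := hXc.measurable
        exact lintegral_const_mul _ (by fun_prop)
    _ ≤ M * J1 * (M * (ENNReal.ofReal (|D| ^ (1 - (s - 1))) * J2)) := by
        gcongr
        have h1 := EX (fun t => ENNReal.ofReal ((|D| ^ 2 + t ^ 2) ^ (-((s - 1) / 2)))) (by fun_prop)
        rw [scale_int (s - 1) _ hDp] at h1
        simpa only [sq_abs] using h1
    _ = C1 b s * ENNReal.ofReal (|D| ^ (-(s - 2 + 2 * β))) := by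
        have e1 : ENNReal.ofReal (1 / c) = ENNReal.ofReal (b ^ 3) * ENNReal.ofReal (|D| ^ (-β)) := by
          rw [← ENNReal.ofReal_mul (by positivity)]
          congr 1
          rw [hc, Real.rpow_neg hDp.le]
          field_simp
        have e2 : ENNReal.ofReal (|D| ^ (-(s - 2 + 2 * β))) = ENNReal.ofReal (|D| ^ (-β)) *
            (ENNReal.ofReal (|D| ^ (-β)) * ENNReal.ofReal (|D| ^ (1 - (s - 1)))) := by
          rw [← ENNReal.ofReal_mul (by positivity), ← ENNReal.ofReal_mul (by positivity),
            ← Real.rpow_add hDp, ← Real.rpow_add hDp]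
          congr 2; ring
        rw [hM, e1, e2, C1]
        ring

lemma far_bd (b β s : ℝ) (hb : 1 < b) (hβ : 0 < β) (hs : 2 < s)
    (μ : Measure (ℕ → ℝ)) (hμ : IsUniformProductMeasure μ) (x y : ℝ)
    (hD : 1 / 2 < b ^ 2 * |x - y|) (hD1 : |x - y| ≤ 1) :
    ∫⁻ p, ENNReal.ofReal (((x - y) ^ 2 + (Wdist b β p.1 p.2 x y) ^ 2) ^ (-(s / 2))) ∂(μ.prod μ) ≤
      ENNReal.ofReal ((1 / (2 * b ^ 2)) ^ (-s)) *
        ENNReal.ofReal (|x - y| ^ (-(s - 2 + 2 * β))) := by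
  have hprob : IsProbabilityMeasure μ := ⟨by simpa using hμ ∅ (fun _ => Set.univ) (by simp)⟩
  have h0 : 0 < b := by linarith
  have hlow : 1 / (2 * b ^ 2) ≤ |x - y| := by
    rw [div_le_iff₀ (by positivity)]; linarith
  have hp : 0 < 1 / (2 * b ^ 2) := by positivity
  have hDp : 0 < |x - y| := by linarith
  calc _ ≤ ∫⁻ p : (ℕ → ℝ) × (ℕ → ℝ), ENNReal.ofReal ((1 / (2 * b ^ 2)) ^ (-s)) *
        ENNReal.ofReal (|x - y| ^ (-(s - 2 + 2 * β))) ∂(μ.prod μ) := by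
        apply lintegral_mono
        intro p
        simp only
        rw [← ENNReal.ofReal_mul (by positivity)]
        apply ENNReal.ofReal_le_ofReal
        have h1 : ((x - y) ^ 2 + (Wdist b β p.1 p.2 x y) ^ 2) ^ (-(s / 2)) ≤
            (|x - y| ^ 2) ^ (-(s / 2)) := by
          apply Real.rpow_le_rpow_of_nonpos (by positivity) _ (by linarith)
          rw [sq_abs]; nlinarith [sq_nonneg (Wdist b β p.1 p.2 x y)]
        have h2 : (|x - y| ^ 2) ^ (-(s / 2)) = |x - y| ^ (-s) := by
          rw [← Real.rpow_natCast, ← Real.rpow_mul hDp.le]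
          congr 1; push_cast; ring
        have h3 : |x - y| ^ (-s) ≤ (1 / (2 * b ^ 2)) ^ (-s) :=
          Real.rpow_le_rpow_of_nonpos hp hlow (by linarith)
        have h4 : 1 ≤ |x - y| ^ (-(s - 2 + 2 * β)) :=
          Real.one_le_rpow_of_pos_of_le_one_of_nonpos hDp hD1 (by linarith)
        have h5 : 0 < (1 / (2 * b ^ 2)) ^ (-s) := by positivity
        nlinarith
    _ = _ := by simp

/-- for `s ∈ (2, 3-2β)`, for a.e. `(Θ,Λ)` the `s`-energy
`I_s(μ_{Θ,Λ}) = ∫₀¹∫₀¹ ((x-y)² + |f(x)-f(y)|²)^{-s/2} dx dy` is finite. -/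
theorem stmt_7 (b β s : ℝ) (hb : 1 < b) (hβ : β ∈ Set.Ioo (0 : ℝ) (1 / 2))
    (hs : s ∈ Set.Ioo (2 : ℝ) (3 - 2 * β))
    (μ : Measure (ℕ → ℝ)) (hμ : IsUniformProductMeasure μ) :
    ∀ᵐ p ∂ μ.prod μ,
      (∫⁻ x in Set.Icc (0 : ℝ) 1, ∫⁻ y in Set.Icc (0 : ℝ) 1,
          ENNReal.ofReal
            (((x - y) ^ 2 + (Wdist b β p.1 p.2 x y) ^ 2) ^ (-(s / 2)))) < ⊤ := by
  have hβ0 := hβ.1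
  have hs0 := hs.1
  have hprob : IsProbabilityMeasure μ := ⟨by simpa using hμ ∅ (fun _ => Set.univ) (by simp)⟩
  set γ := s - 2 + 2 * β with hγ
  have hγ1 : γ < 1 := by have := hs.2; rw [hγ]; linarith
  have hKK : KK < ⊤ := g0_fin
  have hC1 : C1 b s < ⊤ := by
    unfold C1
    have h1 := scale_fin s (by linarith)
    have h2 := scale_fin (s - 1) (by linarith)
    have h3 : 3 * (KK * KK) < ⊤ :=
      ENNReal.mul_lt_top (by norm_num) (ENNReal.mul_lt_top hKK hKK)
    exact ENNReal.mul_lt_top (ENNReal.mul_lt_top (ENNReal.mul_lt_top (ENNReal.pow_lt_top h3)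
      (ENNReal.pow_lt_top ENNReal.ofReal_lt_top)) h1) h2
  set C : ENNReal := C1 b s + ENNReal.ofReal ((1 / (2 * b ^ 2)) ^ (-s)) with hC
  have hCfin : C < ⊤ := ENNReal.add_lt_top.mpr ⟨hC1, ENNReal.ofReal_lt_top⟩
  have hpt : ∀ x ∈ Set.Icc (0 : ℝ) 1, ∀ y ∈ Set.Icc (0 : ℝ) 1, y ≠ x →
      ∫⁻ p, ENNReal.ofReal (((x - y) ^ 2 + (Wdist b β p.1 p.2 x y) ^ 2) ^ (-(s / 2))) ∂(μ.prod μ) ≤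
        C * ENNReal.ofReal (|y - x| ^ (-γ)) := by
    intro x hx y hy hne
    rw [abs_sub_comm y x]
    rcases le_or_gt (b ^ 2 * |x - y|) (1 / 2) with h | h
    · refine (near_bd b β s hb hβ0 hs0 μ hμ x y (sub_ne_zero.mpr hne.symm) h).trans ?_
      gcongr
      exact le_self_add
    · refine (far_bd b β s hb hβ0 hs0 μ hμ x y h ?_).trans ?_
      · rw [abs_le]; constructor <;> linarith [hx.1, hx.2, hy.1, hy.2]
      · gcongr
        exact le_add_self
  set F : ((ℕ → ℝ) × (ℕ → ℝ)) → ℝ → ℝ → ENNReal := fun p x y =>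
    ENNReal.ofReal (((x - y) ^ 2 + (Wdist b β p.1 p.2 x y) ^ 2) ^ (-(s / 2))) with hF
  have hFm : Measurable (fun q : (((ℕ → ℝ) × (ℕ → ℝ)) × ℝ) × ℝ => F q.1.1 q.1.2 q.2) := by
    have hc1 := W1_cont b β hb hβ0
    have hc2 := W2_cont b β hb hβ0
    have a1 : Continuous (fun q : (((ℕ → ℝ) × (ℕ → ℝ)) × ℝ) × ℝ => W1 b β q.1.1.1 q.1.2) :=
      hc1.comp (f := fun q : (((ℕ → ℝ) × (ℕ → ℝ)) × ℝ) × ℝ => (q.1.1.1, q.1.2)) (by fun_prop)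
    have a2 : Continuous (fun q : (((ℕ → ℝ) × (ℕ → ℝ)) × ℝ) × ℝ => W1 b β q.1.1.1 q.2) :=
      hc1.comp (f := fun q : (((ℕ → ℝ) × (ℕ → ℝ)) × ℝ) × ℝ => (q.1.1.1, q.2)) (by fun_prop)
    have a3 : Continuous (fun q : (((ℕ → ℝ) × (ℕ → ℝ)) × ℝ) × ℝ => W2 b β q.1.1.2 q.1.2) :=
      hc2.comp (f := fun q : (((ℕ → ℝ) × (ℕ → ℝ)) × ℝ) × ℝ => (q.1.1.2, q.1.2)) (by fun_prop)
    have a4 : Continuous (fun q : (((ℕ → ℝ) × (ℕ → ℝ)) × ℝ) × ℝ => W2 b β q.1.1.2 q.2) :=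
      hc2.comp (f := fun q : (((ℕ → ℝ) × (ℕ → ℝ)) × ℝ) × ℝ => (q.1.1.2, q.2)) (by fun_prop)
    have a5 : Continuous (fun q : (((ℕ → ℝ) × (ℕ → ℝ)) × ℝ) × ℝ =>
        (q.1.2 - q.2) ^ 2 + (Wdist b β q.1.1.1 q.1.1.2 q.1.2 q.2) ^ 2) := by
      unfold Wdist
      fun_prop
    exact (a5.measurable.pow_const _).ennreal_ofReal
  have hGm : Measurable (fun q : ((ℕ → ℝ) × (ℕ → ℝ)) × ℝ =>
      ∫⁻ y in Set.Icc (0 : ℝ) 1, F q.1 q.2 y) := hFm.lintegral_prod_right'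
  have hIm : Measurable (fun p : (ℕ → ℝ) × (ℕ → ℝ) =>
      ∫⁻ x in Set.Icc (0 : ℝ) 1, ∫⁻ y in Set.Icc (0 : ℝ) 1, F p x y) :=
    hGm.lintegral_prod_right'
  refine ae_lt_top hIm (ne_of_lt ?_)
  rw [lintegral_lintegral_swap (f := fun p x => ∫⁻ y in Set.Icc (0 : ℝ) 1, F p x y)
    hGm.aemeasurable]
  set B : ENNReal := ∫⁻ t in Set.Icc (-1 : ℝ) 1, ENNReal.ofReal (|t| ^ (-γ)) with hB
  have hBfin : B < ⊤ := abs_pow_int γ hγ1 1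
  calc _ ≤ ∫⁻ x in Set.Icc (0 : ℝ) 1, C * B := by
        refine setLIntegral_mono' measurableSet_Icc (fun x hx => ?_)
        have hFx : Measurable (fun q : ((ℕ → ℝ) × (ℕ → ℝ)) × ℝ => F q.1 x q.2) :=
          hFm.comp (f := fun q : ((ℕ → ℝ) × (ℕ → ℝ)) × ℝ => ((q.1, x), q.2)) (by fun_prop)
        rw [lintegral_lintegral_swap (f := fun p y => F p x y) hFx.aemeasurable]
        calc _ ≤ ∫⁻ y in Set.Icc (0 : ℝ) 1, C * ENNReal.ofReal (|y - x| ^ (-γ)) := by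
              apply lintegral_mono_ae
              have hne : ∀ᵐ y : ℝ, y ≠ x := by
                rw [ae_iff]; simp
              filter_upwards [ae_restrict_of_ae hne, ae_restrict_mem measurableSet_Icc]
                with y h1 h2
              exact hpt x hx y h2 h1
          _ = C * ∫⁻ y in Set.Icc (0 : ℝ) 1, ENNReal.ofReal (|y - x| ^ (-γ)) :=
              lintegral_const_mul' _ _ hCfin.ne
          _ ≤ C * B := by
              gcongr
              apply shift_pow_int γ x 1 _ measurableSet_Icc
              intro t ht
              rw [abs_le]; constructor <;> linarith [hx.1, hx.2, ht.1, ht.2]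
    _ = C * B := by simp
    _ < ⊤ := ENNReal.mul_lt_top hCfin hBfin
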